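/- Let (X,d) be a metric space equipped with a Borel measure m, x̄ ∈ X, k > 0 a real number, s ∈ ℕ, and let γ₁,…,γ_s be isometries of X preserving m (each pushes m forward to m) and generating a subgroup Γ' which is free abelian with basis γ₁,…,γ_s, such that d(γᵢ·x̄, x̄) ≤ 2k for each i and d(γ·x̄, x̄) > k for every nontrivial γ ∈ Γ'. Then for every natural number r: (2r+1)^s · m(B_{k/2}(x̄)) ≤ m(B_{2krs + k/2}(x̄)). -/

import Mathlib

/-!
For an integer vector `l` with `|lᵢ| ≤ r`, put `w l = γ₁ ^ l₁ ⋯ γ_s ^ l_s`. By uniqueness of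
exponents, `w` is injective, so for `l ≠ l'` the element `(w l')⁻¹ * w l` of `Γ'` is nontrivial and
moves `x̄` by more than `k`; hence the `k / 2`-balls about the `(2r+1)^s` orbit points `w l x̄` are
pairwise disjoint. They all have the measure of the ball about `x̄`, since all of `Γ'` preserves `m`
(`map_eq_of_mem_closure`). Displacement is subadditive along products of isometries, so
`d(w l x̄, x̄) ≤ s * (r * 2k)` (`dist_list_prod_le`, `dist_zpow_le`), and all these balls lie in the
ball of radius `2krs + k/2` about `x̄`.
-/

open MeasureTheory Metric

theorem dist_mul_le {X : Type*} [MetricSpace X] (g h : X ≃ᵢ X) (x : X) :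
    dist ((g * h) x) x ≤ dist (g x) x + dist (h x) x := by
  calc dist ((g * h) x) x ≤ dist (g (h x)) (g x) + dist (g x) x := dist_triangle _ _ _
    _ = dist (g x) x + dist (h x) x := by rw [g.dist_eq, add_comm]

theorem dist_inv_eq {X : Type*} [MetricSpace X] (g : X ≃ᵢ X) (x : X) :
    dist (g⁻¹ x) x = dist (g x) x := by
  rw [← g.dist_eq (g⁻¹ x) x, IsometryEquiv.apply_inv_self, dist_comm]

theorem dist_pow_le {X : Type*} [MetricSpace X] (g : X ≃ᵢ X) (x : X) (n : ℕ) :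
    dist ((g ^ n) x) x ≤ n * dist (g x) x := by
  induction n with
  | zero => simp
  | succ n ih =>
    rw [pow_succ]
    have := dist_mul_le (g ^ n) g x
    push_cast
    linarith

theorem dist_zpow_le {X : Type*} [MetricSpace X] (g : X ≃ᵢ X) (x : X) (n : ℤ) :
    dist ((g ^ n) x) x ≤ n.natAbs * dist (g x) x := by
  rcases Int.natAbs_eq n with h | h
  · conv_lhs => rw [h, zpow_natCast]
    exact dist_pow_le g x _
  · conv_lhs => rw [h, zpow_neg, zpow_natCast, dist_inv_eq]
    exact dist_pow_le g x _

theorem dist_list_prod_le {X : Type*} [MetricSpace X] (x : X) (C : ℝ) (L : List (X ≃ᵢ X))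
    (hL : ∀ g ∈ L, dist (g x) x ≤ C) : dist (L.prod x) x ≤ L.length * C := by
  induction L with
  | nil => simp
  | cons g L ih =>
    rw [List.prod_cons, List.length_cons]
    have h1 := dist_mul_le g L.prod x
    have h2 := hL g (by simp)
    have h3 := ih fun g' hg' => hL g' (by simp [hg'])
    push_cast
    linarith

theorem map_eq_of_mem_closure {X : Type*} [MetricSpace X] [MeasurableSpace X] [BorelSpace X]
    (m : Measure X) (S : Set (X ≃ᵢ X)) (hS : ∀ g ∈ S, Measure.map g m = m)
    (g : X ≃ᵢ X) (hg : g ∈ Subgroup.closure S) : Measure.map g m = m := by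
  have hmeas : ∀ g : X ≃ᵢ X, Measurable g := fun g => g.continuous.measurable
  induction hg using Subgroup.closure_induction with
  | mem g hg => exact hS g hg
  | one => exact Measure.map_id
  | mul g h _ _ hg hh =>
    rw [IsometryEquiv.coe_mul, ← Measure.map_map (hmeas g) (hmeas h), hh, hg]
  | inv g _ hg =>
    conv_lhs => rw [← hg]
    rw [Measure.map_map (hmeas _) (hmeas g), ← IsometryEquiv.coe_mul, inv_mul_cancel]
    exact Measure.map_id

/-- **Measure-theoretic packing step.**
If `γ₁, …, γ_s` are `m`-preserving isometries of `X` generating a free abelian subgroup `Γ'`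
with basis `γ₁, …, γ_s`, such that `d(γᵢ x̄, x̄) ≤ 2k` and `d(γ x̄, x̄) > k` for every
nontrivial `γ ∈ Γ'`, then for every natural `r`,
`(2r+1)^s · m(B_{k/2}(x̄)) ≤ m(B_{2krs + k/2}(x̄))`. -/
theorem measure_packing
    {X : Type*} [MetricSpace X] [MeasurableSpace X] [BorelSpace X]
    (m : Measure X) (xb : X) (k : ℝ) (hk : 0 < k)
    (s : ℕ) (γ : Fin s → X ≃ᵢ X)
    (hmp : ∀ i, Measure.map (γ i) m = m)
    (Γ' : Subgroup (X ≃ᵢ X)) (hΓ' : Γ' = Subgroup.closure (Set.range γ))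
    (hbasis : ∀ g ∈ Γ', ∃! l : Fin s → ℤ, (List.ofFn fun i => γ i ^ l i).prod = g)
    (hupp : ∀ i, dist (γ i xb) xb ≤ 2 * k)
    (hlow : ∀ g ∈ Γ', g ≠ 1 → k < dist (g xb) xb) :
    ∀ r : ℕ,
      ((2 * r + 1) ^ s : ℕ) * m (ball xb (k / 2)) ≤
        m (ball xb (2 * k * (r : ℝ) * (s : ℝ) + k / 2)) := by
  intro r
  classical
  set w : (Fin s → ℤ) → (X ≃ᵢ X) := fun l => (List.ofFn fun i => γ i ^ l i).prod with hw
  have hwmem : ∀ l, w l ∈ Γ' := by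
    intro l
    apply Subgroup.list_prod_mem
    intro g hg
    obtain ⟨i, rfl⟩ := List.mem_ofFn.1 hg
    rw [hΓ']
    exact Subgroup.zpow_mem _ (Subgroup.subset_closure (Set.mem_range_self i)) _
  have hwinj : Function.Injective w := fun l l' h =>
    (hbasis (w l') (hwmem l')).unique h rfl
  have hball : ∀ l, m (ball (w l xb) (k / 2)) = m (ball xb (k / 2)) := by
    intro l
    have hmap : Measure.map (w l) m = m :=
      map_eq_of_mem_closure m (Set.range γ) (by rintro _ ⟨i, rfl⟩; exact hmp i) _
        (hΓ' ▸ hwmem l)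
    conv_lhs => rw [← hmap]
    rw [Measure.map_apply (w l).continuous.measurable measurableSet_ball,
      (w l).isometry.preimage_ball]
  have hdisj : ∀ l l', l ≠ l' → Disjoint (ball (w l xb) (k / 2)) (ball (w l' xb) (k / 2)) := by
    intro l l' hne
    apply ball_disjoint_ball
    have h := hlow ((w l')⁻¹ * w l) (Γ'.mul_mem (Γ'.inv_mem (hwmem l')) (hwmem l))
      fun h => hne (hwinj (inv_mul_eq_one.1 h).symm)
    rw [← (w l').dist_eq, ← IsometryEquiv.mul_apply, mul_inv_cancel_left] at h
    linarith
  set T : Finset (Fin s → ℤ) := Fintype.piFinset fun _ => Finset.Icc (-(r : ℤ)) r with hT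
  have hcard : T.card = (2 * r + 1) ^ s := by
    have h : ((r : ℤ) + 1 + r).toNat = 2 * r + 1 := by omega
    simp [hT, h]
  have hsub : ∀ l ∈ T, ball (w l xb) (k / 2) ⊆ ball xb (2 * k * (r : ℝ) * (s : ℝ) + k / 2) := by
    intro l hl
    apply ball_subset_ball'
    have h : dist (w l xb) xb ≤ (List.ofFn fun i => γ i ^ l i).length * (r * (2 * k)) := by
      apply dist_list_prod_le
      intro g hg
      obtain ⟨i, rfl⟩ := List.mem_ofFn.1 hg
      have hli := Finset.mem_Icc.1 (Fintype.mem_piFinset.1 hl i)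
      have hr : ((l i).natAbs : ℝ) ≤ r := by
        have : (l i).natAbs ≤ r := by omega
        exact_mod_cast this
      exact (dist_zpow_le _ _ _).trans
        (mul_le_mul hr (hupp i) dist_nonneg (Nat.cast_nonneg r))
    rw [List.length_ofFn] at h
    linarith
  calc (((2 * r + 1) ^ s : ℕ) : ENNReal) * m (ball xb (k / 2))
      = ∑ l ∈ T, m (ball (w l xb) (k / 2)) := by
        rw [Finset.sum_congr rfl fun l _ => hball l, Finset.sum_const, hcard, nsmul_eq_mul]
    _ = m (⋃ l ∈ T, ball (w l xb) (k / 2)) :=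
        (measure_biUnion_finset (fun l _ l' _ hne => hdisj l l' hne)
          fun _ _ => measurableSet_ball).symm
    _ ≤ _ := measure_mono (Set.iUnion₂_subset hsub)
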